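/- Let H be a real Hilbert space, Ψ : H → ℝ ∪ {+∞} proper, lower-semicontinuous and convex, and Φ : H → ℝ convex and continuously differentiable with L-Lipschitz continuous gradient. Suppose x* ∈ argmin(Ψ + Φ), and let (x_k) be generated by the accelerated forward-backward algorithm with parameter α > 3 and step size 0 < s < 1/L. Then the series Σ_{k=1}^∞ k (Θ(x_k) − Θ(x*)) converges and its sum is at most (α−1)E(1) / (2s(α−3)). -/

import Mathlib

open Filter RealInnerProductSpace

/-!
Put `τ = (α - 1) / (k + α - 1)`. The scheme is designed so that `y k` and `x (k + 1)` are the points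
at parameter `τ` on the segments from `x k` to `z_k` and to `z_{k + 1}`. Testing the
forward-backward inequality
`Θ(x_{k + 1}) ≤ Θ(u) + (‖u - y_k‖² - ‖u - x_{k + 1}‖²) / (2s)` at the point `u` at parameter `τ` on
the segment from `x k` to `x*` therefore gives
`Θ(x_{k + 1}) - Θ(x*) ≤ (1 - τ) (Θ(x_k) - Θ(x*)) + τ² (‖z_k - x*‖² - ‖z_{k + 1} - x*‖²) / (2s)`.
After multiplication by `2s (k + α - 1)² / (α - 1)` and in view of
`k (k + α - 1) = (k + α - 2)² - (α - 3) k - (α - 2)²`, this says that the energy `E(k)` drops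
by at least `2s (α - 3) / (α - 1) * k (Θ(x_k) - Θ(x*))`, and the drops add up to at most `E(1)`.
-/

section Smooth

variable {E F : Type*} [NormedAddCommGroup E] [NormedSpace ℝ E] [NormedAddCommGroup F]
  [NormedSpace ℝ F]

lemma hasDerivAt_comp_lineMap {f : E → F} {f' : E →L[ℝ] F} {x y : E} {t : ℝ}
    (hf : HasFDerivAt f f' (AffineMap.lineMap x y t)) :
    HasDerivAt (fun r : ℝ ↦ f (AffineMap.lineMap x y r)) (f' (y - x)) t :=
  hf.comp_hasDerivAt t AffineMap.hasDerivAt_lineMap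

lemma norm_sub_sub_apply_le_of_lipschitzWith {f : E → F} {f' : E → E →L[ℝ] F} {K : NNReal}
    (hf : ∀ x, HasFDerivAt f (f' x) x) (hf' : LipschitzWith K f') (x y : E) :
    ‖f y - f x - f' x (y - x)‖ ≤ K / 2 * ‖y - x‖ ^ 2 := by
  let ℓ : ℝ → E := AffineMap.lineMap x y
  have hremainder (t : ℝ) : HasDerivAt (fun r ↦ f (ℓ r) - f x - r • f' x (y - x))
      ((f' (ℓ t) - f' x) (y - x)) t :=
    (((hasDerivAt_comp_lineMap (hf (ℓ t))).sub_const (f x)).sub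
      ((hasDerivAt_id t).smul_const (f' x (y - x)))).congr_deriv (by simp)
  have hbound (t : ℝ) : HasDerivAt (fun r ↦ K / 2 * ‖y - x‖ ^ 2 * r ^ 2)
      (K * ‖y - x‖ ^ 2 * t) t :=
    ((hasDerivAt_pow 2 t).const_mul _).congr_deriv (by norm_num; ring)
  have hderiv_le (t : ℝ) (ht : 0 ≤ t) :
      ‖(f' (ℓ t) - f' x) (y - x)‖ ≤ K * ‖y - x‖ ^ 2 * t :=
    calc ‖(f' (ℓ t) - f' x) (y - x)‖ ≤ ‖f' (ℓ t) - f' x‖ * ‖y - x‖ :=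
          ContinuousLinearMap.le_opNorm _ _
      _ ≤ K * ‖ℓ t - x‖ * ‖y - x‖ := by gcongr; exact hf'.norm_sub_le _ _
      _ = K * ‖y - x‖ ^ 2 * t := by
          rw [← dist_eq_norm (ℓ t), dist_lineMap_left, dist_eq_norm', Real.norm_of_nonneg ht]; ring
  simpa [ℓ] using image_norm_le_of_norm_deriv_right_le_deriv_boundary
    (fun t _ ↦ (hremainder t).continuousAt.continuousWithinAt)
    (fun t _ ↦ (hremainder t).hasDerivWithinAt) (by simp [ℓ]) hbound
    (fun t ht ↦ hderiv_le t ht.1) (Set.right_mem_Icc.2 zero_le_one)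

lemma add_apply_sub_le_of_convexOn_of_hasFDerivAt {S : Set E} {f : E → ℝ} {f' : E →L[ℝ] ℝ}
    {x y : E} (hf : ConvexOn ℝ S f) (hx : x ∈ S) (hy : y ∈ S) (hf' : HasFDerivAt f f' x) :
    f x + f' (y - x) ≤ f y := by
  have hline : ConvexOn ℝ (AffineMap.lineMap x y ⁻¹' S) (f ∘ AffineMap.lineMap x y) :=
    hf.comp_affineMap (AffineMap.lineMap x y : ℝ →ᵃ[ℝ] E)
  have hslope := hline.le_slope_of_hasDerivAt (x := 0) (y := 1) (by simpa using hx)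
    (by simpa using hy) one_pos (hasDerivAt_comp_lineMap (by simpa using hf'))
  rw [slope_def_field] at hslope
  simp only [Function.comp_apply, AffineMap.lineMap_apply_one, AffineMap.lineMap_apply_zero,
    sub_zero, div_one] at hslope
  linarith

end Smooth

section UniformlyConvex

lemma add_le_of_uniformConvexOn_of_isMinOn {E : Type*} [NormedAddCommGroup E] [NormedSpace ℝ E]
    {S : Set E} {w : ℝ → ℝ} {f : E → ℝ} {p u : E} (hf : UniformConvexOn S w f)
    (hmin : IsMinOn f S p) (hp : p ∈ S) (hu : u ∈ S) : f p + w ‖u - p‖ ≤ f u := by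
  have hsegment : ∀ t ∈ Set.Ioo (0 : ℝ) 1, f p + t * w ‖u - p‖ ≤ f u := by
    rintro t ⟨ht₀, ht₁⟩
    have ht : 0 < 1 - t := sub_pos.2 ht₁
    have hle := (hmin (hf.1 hu hp ht.le ht₀.le (sub_add_cancel 1 t))).trans
      (hf.2 hu hp ht.le ht₀.le (sub_add_cancel 1 t))
    simp only [smul_eq_mul] at hle
    refine le_of_mul_le_mul_left ?_ ht
    linarith
  have hlim : Tendsto (fun t : ℝ ↦ f p + t * w ‖u - p‖) (nhdsWithin 1 (Set.Iio 1))
      (nhds (f p + 1 * w ‖u - p‖)) :=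
    ((continuous_const.add (continuous_id.mul continuous_const)).tendsto 1).mono_left
      nhdsWithin_le_nhds
  rw [one_mul] at hlim
  exact le_of_tendsto hlim (eventually_of_mem (Ioo_mem_nhdsLT one_pos) hsegment)

lemma strongConvexOn_add_half_mul_norm_sub_sq {H : Type*} [NormedAddCommGroup H]
    [InnerProductSpace ℝ H] {S : Set H} {f : H → ℝ} (hf : ConvexOn ℝ S f) (m : ℝ) (v : H) :
    StrongConvexOn S m (fun u ↦ f u + m / 2 * ‖u - v‖ ^ 2) := by
  have haffine : ConvexOn ℝ S (fun u ↦ ⟪-(m • v), u⟫ + m / 2 * ‖v‖ ^ 2) :=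
    ((innerₗ H (-(m • v))).convexOn hf.1).add_const _
  refine strongConvexOn_iff_convex.2 ((hf.add haffine).congr fun u _ ↦ ?_)
  simp only [Pi.add_apply, norm_sub_sq_real, inner_neg_left, real_inner_smul_left,
    real_inner_comm u v]
  ring

end UniformlyConvex

section Prox

variable {H : Type*} [NormedAddCommGroup H] [InnerProductSpace ℝ H]
  {C : Set H} {ψ φ : H → ℝ} {u v y p : H} {s : ℝ}

/-- `p` is a value at `v` of the proximal operator, with step size `s`, of the function equal to `ψ`
on `C` and to `+∞` off `C`. The set `C` plays the role of the effective domain, which keeps `ψ`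
real-valued. -/
def IsProx (C : Set H) (ψ : H → ℝ) (s : ℝ) (v p : H) : Prop :=
  p ∈ C ∧ IsMinOn (fun u ↦ ψ u + 1 / (2 * s) * ‖u - v‖ ^ 2) C p

lemma IsProx.add_norm_sub_sq_le (hp : IsProx C ψ s v p) (hψ : ConvexOn ℝ C ψ) (hu : u ∈ C) :
    ψ p + 1 / (2 * s) * ‖p - v‖ ^ 2 + 1 / (2 * s) * ‖u - p‖ ^ 2 ≤
      ψ u + 1 / (2 * s) * ‖u - v‖ ^ 2 := by
  have hconvex := strongConvexOn_add_half_mul_norm_sub_sq hψ (1 / s) v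
  rw [div_div, mul_comm s] at hconvex
  simpa only [div_div, mul_comm s] using
    add_le_of_uniformConvexOn_of_isMinOn hconvex hp.2 hp.1 hu

lemma norm_sub_sub_smul_sq_div_two_mul (hs : s ≠ 0) (u y g : H) :
    1 / (2 * s) * ‖u - (y - s • g)‖ ^ 2 =
      1 / (2 * s) * ‖u - y‖ ^ 2 + ⟪g, u - y⟫ + s / 2 * ‖g‖ ^ 2 := by
  rw [← sub_add, norm_add_sq_real, norm_smul, real_inner_smul_right, real_inner_comm, mul_pow,
    Real.norm_eq_abs, sq_abs]
  field_simp

lemma IsProx.forwardBackward_le {φ' : H → H} {K : NNReal} (hp : IsProx C ψ s (y - s • φ' y) p)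
    (hψ : ConvexOn ℝ C ψ) (hφ : ConvexOn ℝ Set.univ φ)
    (hφ' : ∀ u, HasFDerivAt φ (innerSL ℝ (φ' u)) u) (hK : LipschitzWith K φ') (hs : 0 < s)
    (hsK : s * K ≤ 1) (hu : u ∈ C) :
    ψ p + φ p ≤ ψ u + φ u + 1 / (2 * s) * (‖u - y‖ ^ 2 - ‖u - p‖ ^ 2) := by
  have hbackward := hp.add_norm_sub_sq_le hψ hu
  rw [norm_sub_sub_smul_sq_div_two_mul hs.ne', norm_sub_sub_smul_sq_div_two_mul hs.ne'] at hbackward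
  have htangent : φ y + ⟪φ' y, u - y⟫ ≤ φ u :=
    add_apply_sub_le_of_convexOn_of_hasFDerivAt hφ (Set.mem_univ y) (Set.mem_univ u) (hφ' y)
  have hlipschitz : LipschitzWith K fun u ↦ innerSL ℝ (φ' u) :=
    (one_mul K) ▸ (InnerProductSpace.toDualMap ℝ H).lipschitz.comp hK
  have hdescent : φ p - φ y - ⟪φ' y, p - y⟫ ≤ K / 2 * ‖p - y‖ ^ 2 :=
    (Real.le_norm_self _).trans (norm_sub_sub_apply_le_of_lipschitzWith hφ' hlipschitz y p)
  have hstep : K / 2 * ‖p - y‖ ^ 2 ≤ 1 / (2 * s) * ‖p - y‖ ^ 2 := by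
    refine mul_le_mul_of_nonneg_right ?_ (sq_nonneg _)
    rw [div_le_div_iff₀ two_pos (by positivity)]
    linarith
  linarith

end Prox

lemma summable_and_tsum_le_of_add_le {a E : ℕ → ℝ} (ha : ∀ n, 0 ≤ a n) (hE : ∀ n, 0 ≤ E n)
    (h : ∀ n, E (n + 1) + a n ≤ E n) : Summable a ∧ ∑' n, a n ≤ E 0 := by
  have hpartial (n : ℕ) : ∑ k ∈ Finset.range n, a k ≤ E 0 :=
    calc ∑ k ∈ Finset.range n, a k ≤ ∑ k ∈ Finset.range n, (E k - E (k + 1)) :=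
          Finset.sum_le_sum fun k _ ↦ by linarith [h k]
      _ = E 0 - E n := Finset.sum_range_sub' E n
      _ ≤ E 0 := sub_le_self _ (hE n)
  exact ⟨summable_of_sum_range_le ha hpartial, Real.tsum_le_of_sum_range_le ha hpartial⟩

section FISTA

variable {H : Type*} [NormedAddCommGroup H] [InnerProductSpace ℝ H]

/-- `x`, `y` are generated by the accelerated forward-backward algorithm for `ψ + φ` on `C`, where
`φ'` is the gradient of the smooth part `φ`. As in `IsProx`, the constraint `C` encodes the
effective domain of the nonsmooth part. The iterations are those of index `k ≥ 1`, so `x 0` is an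
arbitrary initial point and `y 0` is unconstrained. -/
structure IsFISTA (C : Set H) (ψ : H → ℝ) (φ' : H → H) (s α : ℝ) (x y : ℕ → H) : Prop where
  mem_one : x 1 ∈ C
  extrapolation : ∀ k : ℕ, 1 ≤ k →
    y k = x k + (((k : ℝ) - 1) / ((k : ℝ) + α - 1)) • (x k - x (k - 1))
  isProx : ∀ k : ℕ, 1 ≤ k → IsProx C ψ s (y k - s • φ' (y k)) (x (k + 1))

/-- The point `z_k = x_k + ((k - 1) / (α - 1)) (x_k - x_{k - 1})` of the energy argument. -/
noncomputable def fistaAnchor (α : ℝ) (x : ℕ → H) (k : ℕ) : H :=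
  x k + (((k : ℝ) - 1) / (α - 1)) • (x k - x (k - 1))

/-- The energy `E(k)` of the iterates `x` for the objective `Θ`, relative to the reference point
`z`, which is `x*` in the paper. -/
noncomputable def fistaEnergy (Θ : H → ℝ) (s α : ℝ) (x : ℕ → H) (z : H) (k : ℕ) : ℝ :=
  2 * s / (α - 1) * ((k : ℝ) + α - 2) ^ 2 * (Θ (x k) - Θ z)
    + (α - 1) * ‖fistaAnchor α x k - z‖ ^ 2

variable {C : Set H} {ψ φ : H → ℝ} {φ' : H → H} {K : NNReal} {s α : ℝ} {x y : ℕ → H} {z : H} {k : ℕ}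

lemma fistaEnergy_nonneg {Θ : H → ℝ} (hs : 0 ≤ s) (hα : 1 ≤ α) (hz : Θ z ≤ Θ (x k)) :
    0 ≤ fistaEnergy Θ s α x z k := by
  have hα' : 0 ≤ α - 1 := sub_nonneg.2 hα
  exact add_nonneg (mul_nonneg (mul_nonneg (div_nonneg (by positivity) hα') (sq_nonneg _))
    (sub_nonneg.2 hz)) (mul_nonneg hα' (sq_nonneg _))

lemma lineMap_fistaAnchor_succ (hα : α ≠ 1) (hk : (k : ℝ) + α - 1 ≠ 0) :
    AffineMap.lineMap (x k) (fistaAnchor α x (k + 1)) ((α - 1) / ((k : ℝ) + α - 1)) =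
      x (k + 1) := by
  have hα' : α - 1 ≠ 0 := sub_ne_zero.2 hα
  have hcoeff : (α - 1) / ((k : ℝ) + α - 1) * (1 + k / (α - 1)) = 1 := by
    field_simp
    ring
  have hanchor : fistaAnchor α x (k + 1) - x k = (1 + k / (α - 1)) • (x (k + 1) - x k) := by
    simp only [fistaAnchor, Nat.cast_add, Nat.cast_one, add_sub_cancel_right, Nat.add_sub_cancel]
    module
  rw [AffineMap.lineMap_apply_module', hanchor, smul_smul, hcoeff, one_smul, sub_add_cancel]

namespace IsFISTA

lemma mem (h : IsFISTA C ψ φ' s α x y) (hk : 1 ≤ k) : x k ∈ C := by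
  obtain _ | _ | k := k
  · contradiction
  · exact h.mem_one
  · exact (h.isProx (k + 1) (Nat.le_add_left 1 k)).1

lemma lineMap_fistaAnchor (h : IsFISTA C ψ φ' s α x y) (hα : α ≠ 1) (hk : 1 ≤ k) :
    AffineMap.lineMap (x k) (fistaAnchor α x k) ((α - 1) / ((k : ℝ) + α - 1)) = y k := by
  have hcoeff : (α - 1) / ((k : ℝ) + α - 1) * ((k - 1) / (α - 1)) = (k - 1) / (k + α - 1) := by
    rw [mul_comm, div_mul_div_cancel₀ (sub_ne_zero.2 hα)]
  rw [h.extrapolation k hk, AffineMap.lineMap_apply_module', fistaAnchor, add_sub_cancel_left,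
    smul_smul, hcoeff, add_comm]

lemma objective_sub_le (h : IsFISTA C ψ φ' s α x y) (hψ : ConvexOn ℝ C ψ)
    (hφ : ConvexOn ℝ Set.univ φ) (hφ' : ∀ u, HasFDerivAt φ (innerSL ℝ (φ' u)) u)
    (hK : LipschitzWith K φ') (hs : 0 < s) (hsK : s * K ≤ 1) (hα : 1 < α) (hz : z ∈ C)
    (hk : 1 ≤ k) {τ : ℝ} (hτ : τ = (α - 1) / ((k : ℝ) + α - 1)) :
    (ψ + φ) (x (k + 1)) - (ψ + φ) z ≤ (1 - τ) * ((ψ + φ) (x k) - (ψ + φ) z) +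
      τ ^ 2 / (2 * s) * (‖fistaAnchor α x k - z‖ ^ 2 - ‖fistaAnchor α x (k + 1) - z‖ ^ 2) := by
  have hα' : 0 < α - 1 := sub_pos.2 hα
  have hD : 0 < (k : ℝ) + α - 1 := by linarith [(Nat.cast_nonneg k : (0 : ℝ) ≤ k)]
  have hτ₀ : 0 ≤ τ := hτ ▸ div_nonneg hα'.le hD.le
  have hτ₁ : 0 ≤ 1 - τ := by
    rw [hτ, sub_nonneg, div_le_one hD]
    linarith [(Nat.cast_nonneg k : (0 : ℝ) ≤ k)]
  have hτ_sum : 1 - τ + τ = 1 := sub_add_cancel 1 τ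
  let u := AffineMap.lineMap (x k) z τ
  have hu : u = (1 - τ) • x k + τ • z := AffineMap.lineMap_apply_module _ _ _
  have hu_mem : u ∈ C := hu ▸ hψ.1 (h.mem hk) hz hτ₁ hτ₀ hτ_sum
  have hu_le : (ψ + φ) u ≤ (1 - τ) * (ψ + φ) (x k) + τ * (ψ + φ) z :=
    hu ▸ (hψ.add (hφ.subset (Set.subset_univ C) hψ.1)).2 (h.mem hk) hz hτ₁ hτ₀ hτ_sum
  have hnorm {v w : H} (hv : AffineMap.lineMap (x k) w ((α - 1) / ((k : ℝ) + α - 1)) = v) :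
      ‖u - v‖ = τ * ‖w - z‖ := by
    rw [← hv, ← hτ, ← vsub_eq_sub, AffineMap.lineMap_vsub_lineMap,
      AffineMap.lineMap_apply_module, vsub_self, smul_zero, zero_add, norm_smul,
      Real.norm_of_nonneg hτ₀, vsub_eq_sub, norm_sub_rev]
  have hstep := (h.isProx k hk).forwardBackward_le hψ hφ hφ' hK hs hsK hu_mem
  rw [hnorm (h.lineMap_fistaAnchor hα.ne' hk), hnorm (lineMap_fistaAnchor_succ hα.ne' hD.ne')]
    at hstep
  simp only [Pi.add_apply] at hu_le ⊢
  linear_combination hstep + hu_le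

lemma energy_succ_add_le (h : IsFISTA C ψ φ' s α x y) (hψ : ConvexOn ℝ C ψ)
    (hφ : ConvexOn ℝ Set.univ φ) (hφ' : ∀ u, HasFDerivAt φ (innerSL ℝ (φ' u)) u)
    (hK : LipschitzWith K φ') (hs : 0 < s) (hsK : s * K ≤ 1) (hα : 1 < α) (hz : z ∈ C)
    (hk : 1 ≤ k) (hzk : (ψ + φ) z ≤ (ψ + φ) (x k)) :
    fistaEnergy (ψ + φ) s α x z (k + 1) +
        2 * s * (α - 3) / (α - 1) * (k * ((ψ + φ) (x k) - (ψ + φ) z)) ≤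
      fistaEnergy (ψ + φ) s α x z k := by
  have hα' : 0 < α - 1 := sub_pos.2 hα
  have hD : 0 < (k : ℝ) + α - 1 := by linarith [(Nat.cast_nonneg k : (0 : ℝ) ≤ k)]
  obtain ⟨τ, hτ⟩ : ∃ τ, τ = (α - 1) / ((k : ℝ) + α - 1) := ⟨_, rfl⟩
  have hgap_weight : 2 * s / (α - 1) * ((k : ℝ) + α - 1) ^ 2 * (1 - τ) =
      2 * s / (α - 1) * (((k : ℝ) + α - 2) ^ 2 - (α - 3) * k - (α - 2) ^ 2) := by
    rw [hτ]
    field_simp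
    ring
  have hanchor_weight : 2 * s / (α - 1) * ((k : ℝ) + α - 1) ^ 2 * (τ ^ 2 / (2 * s)) = α - 1 := by
    rw [hτ]
    field_simp
  have hstep := mul_le_mul_of_nonneg_left
    (h.objective_sub_le hψ hφ hφ' hK hs hsK hα hz hk hτ)
    (show 0 ≤ 2 * s / (α - 1) * ((k : ℝ) + α - 1) ^ 2 by positivity)
  rw [mul_add, ← mul_assoc, ← mul_assoc, hgap_weight, hanchor_weight] at hstep
  have hslack : 0 ≤ 2 * s / (α - 1) * (α - 2) ^ 2 * ((ψ + φ) (x k) - (ψ + φ) z) :=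
    mul_nonneg (by positivity) (sub_nonneg.2 hzk)
  unfold fistaEnergy
  push_cast
  linear_combination hstep + hslack

lemma exists_hasSum_le (h : IsFISTA C ψ φ' s α x y) (hψ : ConvexOn ℝ C ψ)
    (hφ : ConvexOn ℝ Set.univ φ) (hφ' : ∀ u, HasFDerivAt φ (innerSL ℝ (φ' u)) u)
    (hK : LipschitzWith K φ') (hs : 0 < s) (hsK : s * K ≤ 1) (hα : 3 < α) (hz : z ∈ C)
    (hzx : ∀ k : ℕ, 1 ≤ k → (ψ + φ) z ≤ (ψ + φ) (x k)) :
    ∃ S : ℝ, HasSum (fun k : ℕ ↦ (k : ℝ) * ((ψ + φ) (x k) - (ψ + φ) z)) S ∧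
      S ≤ (α - 1) / (2 * s * (α - 3)) * fistaEnergy (ψ + φ) s α x z 1 := by
  have hα₁ : 0 < α - 1 := by linarith
  have hα₃ : 0 < α - 3 := by linarith
  let a (k : ℕ) : ℝ := k * ((ψ + φ) (x k) - (ψ + φ) z)
  obtain ⟨c, hc⟩ : ∃ c, c = 2 * s * (α - 3) / (α - 1) := ⟨_, rfl⟩
  have hc₀ : 0 < c := hc ▸ div_pos (mul_pos (mul_pos two_pos hs) hα₃) hα₁
  have ha (n : ℕ) : 0 ≤ a (n + 1) :=
    mul_nonneg (Nat.cast_nonneg _) (sub_nonneg.2 (hzx _ (Nat.le_add_left 1 n)))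
  obtain ⟨hsummable, hle⟩ := summable_and_tsum_le_of_add_le
    (a := fun n ↦ c * a (n + 1)) (E := fun n ↦ fistaEnergy (ψ + φ) s α x z (n + 1))
    (fun n ↦ mul_nonneg hc₀.le (ha n))
    (fun n ↦ fistaEnergy_nonneg hs.le (by linarith) (hzx _ (Nat.le_add_left 1 n)))
    (fun n ↦ hc ▸ h.energy_succ_add_le hψ hφ hφ' hK hs hsK (by linarith) hz
      (Nat.le_add_left 1 n) (hzx _ (Nat.le_add_left 1 n)))
  rw [tsum_mul_left, mul_comm c, ← le_div_iff₀ hc₀] at hle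
  have hshift : HasSum (fun n ↦ a (n + 1)) (∑' n, a (n + 1)) :=
    ((summable_mul_left_iff hc₀.ne').1 hsummable).hasSum
  refine ⟨_, (hasSum_nat_add_iff 1).1 hshift, ?_⟩
  calc ∑' n, a (n + 1) + ∑ k ∈ Finset.range 1, a k = ∑' n, a (n + 1) := by simp [a]
    _ ≤ fistaEnergy (ψ + φ) s α x z 1 / c := hle
    _ = (α - 1) / (2 * s * (α - 3)) * fistaEnergy (ψ + φ) s α x z 1 := by
      rw [hc, div_div_eq_mul_div, mul_div_assoc, mul_comm]

end IsFISTA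

end FISTA

section ExtendedReal

variable {E : Type*} {Ψ : E → EReal}

/-- The effective domain of an extended-real-valued function that avoids `⊥`. On it `Ψ` agrees with
the real-valued function `fun u ↦ (Ψ u).toReal`, to which the real-valued theory applies. -/
def effectiveDomain (Ψ : E → EReal) : Set E := {u | Ψ u ≠ ⊤}

lemma ereal_add_coe_le_add_coe_iff {a b : EReal} (ha : a ≠ ⊤) (ha' : a ≠ ⊥) (hb : b ≠ ⊤)
    (hb' : b ≠ ⊥) (p q : ℝ) : a + p ≤ b + q ↔ a.toReal + p ≤ b.toReal + q := by
  lift a to ℝ using ⟨ha, ha'⟩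
  lift b to ℝ using ⟨hb, hb'⟩
  norm_cast

lemma ereal_add_coe_sub_add_coe {a b : EReal} (ha : a ≠ ⊤) (ha' : a ≠ ⊥) (hb : b ≠ ⊤) (hb' : b ≠ ⊥)
    (p q : ℝ) : a + p - (b + q) = ((a.toReal + p - (b.toReal + q) : ℝ) : EReal) := by
  lift a to ℝ using ⟨ha, ha'⟩
  lift b to ℝ using ⟨hb, hb'⟩
  norm_cast

lemma ereal_add_coe_sub_add_coe_nonneg {a b : EReal} {p q : ℝ} (hb : b ≠ ⊤) (hb' : b ≠ ⊥)
    (h : b + q ≤ a + p) : 0 ≤ a + p - (b + q) := by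
  lift b to ℝ using ⟨hb, hb'⟩
  rw [← EReal.coe_add] at h ⊢
  exact (EReal.sub_nonneg (.inr (EReal.coe_ne_top _)) (.inr (EReal.coe_ne_bot _))).2 h

lemma ereal_top_add_coe_sub_add_coe {b : EReal} (hb : b ≠ ⊤) (p q : ℝ) :
    ⊤ + (p : EReal) - (b + q) = ⊤ := by
  rw [EReal.top_add_coe, EReal.top_sub (EReal.add_ne_top hb (EReal.coe_ne_top q))]

lemma ne_top_of_add_coe_le {a b : EReal} {p q : ℝ} (hb : b ≠ ⊤) (h : a + p ≤ b + q) :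
    a ≠ ⊤ := by
  rintro rfl
  rw [EReal.top_add_coe, top_le_iff] at h
  exact EReal.add_ne_top hb (EReal.coe_ne_top q) h

lemma convexOn_toReal [AddCommGroup E] [Module ℝ E] (hbot : ∀ u, Ψ u ≠ ⊥)
    (hΨ : ∀ u v : E, ∀ a b : ℝ, 0 ≤ a → 0 ≤ b → a + b = 1 →
      Ψ (a • u + b • v) ≤ (a : EReal) * Ψ u + (b : EReal) * Ψ v) :
    ConvexOn ℝ (effectiveDomain Ψ) (fun u ↦ (Ψ u).toReal) := by
  have hreal : ∀ u ∈ effectiveDomain Ψ, ∀ v ∈ effectiveDomain Ψ, ∀ a b : ℝ, 0 ≤ a → 0 ≤ b →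
      a + b = 1 → Ψ (a • u + b • v) ≤ ((a * (Ψ u).toReal + b * (Ψ v).toReal : ℝ) : EReal) := by
    intro u hu v hv a b ha hb hab
    have hle := hΨ u v a b ha hb hab
    rw [← EReal.coe_toReal hu (hbot u), ← EReal.coe_toReal hv (hbot v)] at hle
    exact_mod_cast hle
  have hconvex : Convex ℝ (effectiveDomain Ψ) := fun u hu v hv a b ha hb hab ↦
    ne_top_of_le_ne_top (EReal.coe_ne_top _) (hreal u hu v hv a b ha hb hab)
  exact ⟨hconvex, fun u hu v hv a b ha hb hab ↦
    EReal.toReal_le_toReal (hreal u hu v hv a b ha hb hab) (hbot _) (EReal.coe_ne_top _)⟩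

lemma isProx_toReal {H : Type*} [NormedAddCommGroup H] [InnerProductSpace ℝ H] {Ψ : H → EReal}
    {s : ℝ} {v p : H} (hbot : ∀ u, Ψ u ≠ ⊥) (hproper : ∃ u, Ψ u ≠ ⊤)
    (hp : ∀ u, Ψ p + ((1 / (2 * s) * ‖p - v‖ ^ 2 : ℝ) : EReal) ≤
      Ψ u + ((1 / (2 * s) * ‖u - v‖ ^ 2 : ℝ) : EReal)) :
    IsProx (effectiveDomain Ψ) (fun u ↦ (Ψ u).toReal) s v p := by
  obtain ⟨u₀, hu₀⟩ := hproper
  have hp_top : Ψ p ≠ ⊤ := ne_top_of_add_coe_le hu₀ (hp u₀)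
  exact ⟨hp_top, fun u hu ↦ (ereal_add_coe_le_add_coe_iff hp_top (hbot p) hu (hbot u) _ _).1 (hp u)⟩

lemma hasSum_coe_ereal {ι : Type*} {f : ι → ℝ} {a : ℝ} (h : HasSum f a) :
    HasSum (fun i ↦ (f i : EReal)) (a : EReal) :=
  h.map (⟨⟨Real.toEReal, EReal.coe_zero⟩, EReal.coe_add⟩ : ℝ →+ EReal) continuous_coe_real_ereal

end ExtendedReal

theorem fista_summability_values_general
    {H : Type*} [NormedAddCommGroup H] [InnerProductSpace ℝ H]
    (Ψ : H → EReal) (Φ : H → ℝ) (Φ' : H → H) (K : NNReal) (s α : ℝ)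
    (hΨ_ne_bot : ∀ u, Ψ u ≠ ⊥) (hΨ_proper : ∃ u, Ψ u ≠ ⊤)
    (hΨ_convex : ∀ u v : H, ∀ a b : ℝ, 0 ≤ a → 0 ≤ b → a + b = 1 →
      Ψ (a • u + b • v) ≤ (a : EReal) * Ψ u + (b : EReal) * Ψ v)
    (hΦ_convex : ConvexOn ℝ Set.univ Φ)
    (hΦ_diff : ∀ u, HasFDerivAt Φ (innerSL ℝ (Φ' u)) u)
    (hΦ_lip : LipschitzWith K Φ')
    (hα : 3 < α) (hs : 0 < s) (hsK : s * K ≤ 1)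
    (x y : ℕ → H)
    (hy : ∀ k : ℕ, 1 ≤ k →
      y k = x k + (((k : ℝ) - 1) / ((k : ℝ) + α - 1)) • (x k - x (k - 1)))
    (hx : ∀ k : ℕ, 1 ≤ k → ∀ u : H,
      Ψ (x (k + 1)) + ((1 / (2 * s) * ‖x (k + 1) - (y k - s • Φ' (y k))‖ ^ 2 : ℝ) : EReal)
        ≤ Ψ u + ((1 / (2 * s) * ‖u - (y k - s • Φ' (y k))‖ ^ 2 : ℝ) : EReal))
    (z : H)
    (hz : ∀ k : ℕ, 1 ≤ k → Ψ z + (Φ z : EReal) ≤ Ψ (x k) + (Φ (x k) : EReal)) :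
    ∃ S : EReal, HasSum (fun k : ℕ ↦ ((k : ℝ) : EReal) *
        ((Ψ (x k) + (Φ (x k) : EReal)) - (Ψ z + (Φ z : EReal)))) S ∧
      S ≤ (((α - 1) / (2 * s * (α - 3)) : ℝ) : EReal) *
        (((2 * s / (α - 1) * ((1 : ℝ) + α - 2) ^ 2 : ℝ) : EReal) *
            ((Ψ (x 1) + (Φ (x 1) : EReal)) - (Ψ z + (Φ z : EReal))) +
          (((α - 1) * ‖(x 1 + (((1 : ℝ) - 1) / (α - 1)) • (x 1 - x (1 - 1))) - z‖ ^ 2 : ℝ)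
            : EReal)) := by
  have hprox (k : ℕ) (hk : 1 ≤ k) := isProx_toReal hΨ_ne_bot hΨ_proper (hx k hk)
  have hz_top : Ψ z ≠ ⊤ := ne_top_of_add_coe_le (hprox 1 le_rfl).1 (hz 2 one_le_two)
  by_cases hx₁ : Ψ (x 1) = ⊤
  · have hα₁ : 0 < α - 1 := by linarith
    have hα₂ : 0 < 1 + α - 2 := by linarith
    have hα₃ : 0 < α - 3 := by linarith
    refine ⟨_, hasSum_of_isLUB_of_nonneg _ (fun k ↦ ?_) isLUB_iSup, le_top.trans_eq ?_⟩
    · obtain rfl | hk := k.eq_zero_or_pos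
      · simp
      · exact EReal.mul_nonneg (EReal.coe_nonneg.2 k.cast_nonneg)
          (ereal_add_coe_sub_add_coe_nonneg hz_top (hΨ_ne_bot z) (hz k hk))
    · rw [hx₁, ereal_top_add_coe_sub_add_coe hz_top, EReal.coe_mul_top_of_pos (by positivity),
        EReal.top_add_coe,
        EReal.coe_mul_top_of_pos (div_pos hα₁ (mul_pos (mul_pos two_pos hs) hα₃))]
  · have hfista : IsFISTA (effectiveDomain Ψ) (fun u ↦ (Ψ u).toReal) Φ' s α x y := ⟨hx₁, hy, hprox⟩
    have hgap (k : ℕ) (hk : 1 ≤ k) := ereal_add_coe_sub_add_coe (hfista.mem hk) (hΨ_ne_bot (x k))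
      hz_top (hΨ_ne_bot z) (Φ (x k)) (Φ z)
    obtain ⟨S, hS, hS_le⟩ := hfista.exists_hasSum_le (convexOn_toReal hΨ_ne_bot hΨ_convex)
      hΦ_convex hΦ_diff hΦ_lip hs hsK hα hz_top fun k hk ↦ (ereal_add_coe_le_add_coe_iff hz_top
        (hΨ_ne_bot z) (hfista.mem hk) (hΨ_ne_bot (x k)) (Φ z) (Φ (x k))).1 (hz k hk)
    refine ⟨S, (hasSum_coe_ereal hS).congr_fun fun k ↦ ?_, ?_⟩
    · obtain rfl | hk := k.eq_zero_or_pos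
      · simp
      · rw [hgap k hk, ← EReal.coe_mul, Pi.add_apply, Pi.add_apply]
    · rw [fistaEnergy, fistaAnchor, Nat.cast_one] at hS_le
      rw [hgap 1 le_rfl]
      exact_mod_cast hS_le

/-- Fact 3: `∑ k (Θ(x_k) - Θ(x*)) ≤ (α-1)E(1)/(2s(α-3))`. -/
theorem fista_summability_values
    {H : Type*} [NormedAddCommGroup H] [InnerProductSpace ℝ H] [CompleteSpace H]
    (Ψ : H → EReal) (Φ : H → ℝ) (Φ' : H → H) (L s α : ℝ)
    (hΨ_ne_bot : ∀ u, Ψ u ≠ ⊥) (hΨ_proper : ∃ u, Ψ u ≠ ⊤)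
    (hΨ_lsc : LowerSemicontinuous Ψ)
    (hΨ_convex : ∀ u v : H, ∀ a b : ℝ, 0 ≤ a → 0 ≤ b → a + b = 1 →
      Ψ (a • u + b • v) ≤ (a : EReal) * Ψ u + (b : EReal) * Ψ v)
    (hΦ_convex : ConvexOn ℝ Set.univ Φ)
    (hΦ_diff : ∀ u, HasGradientAt Φ (Φ' u) u)
    (hΦ_lip : LipschitzWith (Real.toNNReal L) Φ')
    (hα : 3 < α) (hs : 0 < s) (hsL : s < 1 / L)
    (x y : ℕ → H)
    (hy : ∀ k : ℕ, 1 ≤ k →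
      y k = x k + (((k : ℝ) - 1) / ((k : ℝ) + α - 1)) • (x k - x (k - 1)))
    (hx : ∀ k : ℕ, 1 ≤ k → ∀ u : H,
      Ψ (x (k + 1)) + ((1 / (2 * s) * ‖x (k + 1) - (y k - s • Φ' (y k))‖ ^ 2 : ℝ) : EReal)
        ≤ Ψ u + ((1 / (2 * s) * ‖u - (y k - s • Φ' (y k))‖ ^ 2 : ℝ) : EReal))
    (xstar : H)
    (hxstar : ∀ u, Ψ xstar + (Φ xstar : EReal) ≤ Ψ u + (Φ u : EReal)) :
    ∃ S : EReal, HasSum (fun k : ℕ => ((k : ℝ) : EReal) * ((Ψ (x k) + (Φ (x k) : EReal)) - (Ψ xstar + (Φ xstar : EReal)))) S ∧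
      S ≤ (((α - 1) / (2 * s * (α - 3)) : ℝ) : EReal) * (((2 * s / (α - 1) * ((1 : ℝ) + α - 2) ^ 2 : ℝ) : EReal) * ((Ψ (x 1) + (Φ (x 1) : EReal)) - (Ψ xstar + (Φ xstar : EReal))) + (((α - 1) * ‖(x 1 + (((1 : ℝ) - 1) / (α - 1)) • (x 1 - x (1 - 1))) - xstar‖ ^ 2 : ℝ) : EReal)) := by
  have hL : 0 < L := one_div_pos.1 (hs.trans hsL)
  have hsK : s * L.toNNReal ≤ 1 := by
    rw [Real.coe_toNNReal L hL.le]
    exact ((lt_div_iff₀ hL).1 hsL).le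
  exact fista_summability_values_general Ψ Φ Φ' L.toNNReal s α hΨ_ne_bot hΨ_proper hΨ_convex
    hΦ_convex hΦ_diff hΦ_lip hα hs hsK x y hy hx xstar fun k _ ↦ hxstar (x k)
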